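/- The generalized robustness of nonclassicality of the n-th Fock state equals e^n n!/n^n: R_C(|n⟩⟨n|) = e^n n!/n^n. -/

import Mathlib

noncomputable section
open scoped ENNReal ComplexOrder
open Filter

variable {H : Type} [NormedAddCommGroup H] [InnerProductSpace ℂ H] [CompleteSpace H]

local notation "⟪" x ", " y "⟫" => @inner ℂ _ _ x y

/-- Bounded operators on `H`. -/
abbrev Op (H : Type) [NormedAddCommGroup H] [InnerProductSpace ℂ H] : Type := H →L[ℂ] H

/-- The rank-one projector `|ψ⟩⟨ψ|`. -/
def projv (ψ : H) : Op H := (innerSL ℂ ψ).smulRight ψ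

/-- The trace of an operator with respect to a Hilbert basis. -/
def trB {ι : Type} (e : HilbertBasis ι ℂ H) (T : Op H) : ℂ := ∑' n, ⟪e n, T (e n)⟫

/-- A density operator: positive, trace-class (summable diagonal), unit trace. -/
def IsDensity {ι : Type} (e : HilbertBasis ι ℂ H) (ρ : Op H) : Prop :=
  ρ.IsPositive ∧ Summable (fun n => (⟪e n, ρ (e n)⟫).re) ∧ trB e ρ = 1

/-- The trace norm `Tr |T| = Tr √(T†T)`. -/
def traceNorm {ι : Type} (e : HilbertBasis ι ℂ H) (T : Op H) : ℝ :=
  ∑' n, (⟪e n, (CFC.sqrt (ContinuousLinearMap.adjoint T ∘L T)) (e n)⟫).re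

/-- Sequential closure of a set of operators in the trace norm. -/
def tnClosure {ι : Type} (e : HilbertBasis ι ℂ H) (S : Set (Op H)) : Set (Op H) :=
  {T | ∃ u : ℕ → Op H, (∀ k, u k ∈ S) ∧
    Tendsto (fun k => traceNorm e (u k - T)) atTop (nhds 0)}

/-- The generalized robustness `R_F(ρ) = inf {1 + λ | (ρ + λτ)/(1+λ) ∈ F, τ a density operator}`. -/
def Robustness {ι : Type} (e : HilbertBasis ι ℂ H) (F : Set (Op H)) (ρ : Op H) : ℝ≥0∞ :=
  sInf {r : ℝ≥0∞ | ∃ lam : ℝ, 0 ≤ lam ∧ ∃ τ : Op H, IsDensity e τ ∧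
    ((1 + lam)⁻¹ : ℝ) • (ρ + lam • τ) ∈ F ∧ r = ENNReal.ofReal (1 + lam)}

/-- The coherent state `|α⟩ = e^{-|α|²/2} ∑ₘ (αᵐ/√m!) |m⟩` in the Fock basis `e`. -/
def coh (e : HilbertBasis ℕ ℂ H) (α : ℂ) : H :=
  ∑' m : ℕ, (Complex.exp (-((‖α‖ : ℂ) ^ 2 / 2)) * α ^ m / (Real.sqrt (Nat.factorial m) : ℂ)) • e m

/-- The classical states: the trace-norm closed convex hull of coherent state projectors. -/
def ClassicalStates (e : HilbertBasis ℕ ℂ H) : Set (Op H) :=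
  tnClosure e (convexHull ℝ {T : Op H | ∃ α : ℂ, T = projv (coh e α)})

/-- Parseval in extended nonnegative form. -/
lemma parseval_hasSum {ι : Type} (e : HilbertBasis ι ℂ H) (x : H) :
    HasSum (fun i => ‖⟪e i, x⟫‖ ^ 2) (‖x‖ ^ 2) := by
  have h := e.hasSum_inner_mul_inner x x
  have h2 := Complex.hasSum_re h
  have e1 : (⟪x, x⟫).re = ‖x‖ ^ 2 := by
    rw [inner_self_eq_norm_sq_to_K]; norm_cast
  rw [e1] at h2
  convert h2 using 2 with i
  rw [← inner_conj_symm x (e i), ← Complex.normSq_eq_conj_mul_self, Complex.ofReal_re,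
    Complex.normSq_eq_norm_sq]

lemma parseval_ennreal {ι : Type} (e : HilbertBasis ι ℂ H) (x : H) :
    ∑' i, ENNReal.ofReal (‖⟪e i, x⟫‖ ^ 2) = ENNReal.ofReal (‖x‖ ^ 2) := by
  have h := parseval_hasSum e x
  rw [← h.tsum_eq, ENNReal.ofReal_tsum_of_nonneg (fun _ => by positivity) h.summable]

/-- Hilbert–Schmidt norm of an operator and its adjoint coincide. -/
lemma hs_adjoint {ι : Type} (e : HilbertBasis ι ℂ H) (T : Op H) :
    ∑' i, ENNReal.ofReal (‖T (e i)‖ ^ 2) =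
      ∑' i, ENNReal.ofReal (‖ContinuousLinearMap.adjoint T (e i)‖ ^ 2) := by
  simp_rw [← parseval_ennreal e (T _), ← parseval_ennreal e (ContinuousLinearMap.adjoint T _)]
  rw [ENNReal.tsum_comm]
  refine tsum_congr fun i => tsum_congr fun j => ?_
  rw [ContinuousLinearMap.adjoint_inner_right, norm_inner_symm]

/-- Compressing a positive trace-class operator by a selfadjoint contraction. -/
lemma compress {ι : Type} (e : HilbertBasis ι ℂ H) (A Q : Op H) (hA : A.IsPositive)
    (hs : Summable (fun i => (⟪e i, A (e i)⟫).re)) (hQ : IsSelfAdjoint Q)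
    (hc : ∀ x, ‖Q x‖ ≤ ‖x‖) :
    Summable (fun i => (⟪Q (e i), A (Q (e i))⟫).re) ∧
    ∑' i, (⟪Q (e i), A (Q (e i))⟫).re ≤ ∑' i, (⟪e i, A (e i)⟫).re := by
  have hA0 : 0 ≤ A := (ContinuousLinearMap.nonneg_iff_isPositive A).2 hA
  set S := CFC.sqrt A with hS
  have hSS : S * S = A := CFC.sqrt_mul_sqrt_self A hA0
  have hSa : IsSelfAdjoint S := IsSelfAdjoint.of_nonneg (CFC.sqrt_nonneg A)
  have hSadj : ContinuousLinearMap.adjoint S = S := hSa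
  have hQadj : ContinuousLinearMap.adjoint Q = Q := hQ
  have key : ∀ x, (⟪x, A x⟫).re = ‖S x‖ ^ 2 := by
    intro x
    have : ⟪x, A x⟫ = ⟪S x, S x⟫ := by
      rw [← hSS]
      conv_rhs => rw [← ContinuousLinearMap.adjoint_inner_right, hSadj]
      rfl
    rw [this, inner_self_eq_norm_sq_to_K]; norm_cast
  simp_rw [key] at hs ⊢
  have hle : ∑' i, ENNReal.ofReal (‖S (Q (e i))‖ ^ 2) ≤ ∑' i, ENNReal.ofReal (‖S (e i)‖ ^ 2) := by
    have := hs_adjoint e (S ∘L Q)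
    rw [ContinuousLinearMap.adjoint_comp, hSadj, hQadj] at this
    calc _ = _ := this
      _ ≤ _ := by
        refine ENNReal.tsum_le_tsum fun i => ENNReal.ofReal_le_ofReal ?_
        have := hc (S (e i))
        simp only [ContinuousLinearMap.comp_apply]
        gcongr
  rw [← ENNReal.ofReal_tsum_of_nonneg (fun _ => by positivity) hs] at hle
  have hne : ∑' i, ENNReal.ofReal (‖S (Q (e i))‖ ^ 2) ≠ ⊤ :=
    (lt_of_le_of_lt hle ENNReal.ofReal_lt_top).ne
  have hsum : Summable (fun i => ‖S (Q (e i))‖ ^ 2) := by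
    have := ENNReal.summable_toReal hne
    refine this.congr fun i => ?_
    rw [ENNReal.toReal_ofReal (by positivity)]
  refine ⟨hsum, ?_⟩
  rw [← ENNReal.ofReal_tsum_of_nonneg (fun _ => by positivity) hsum] at hle
  exact (ENNReal.ofReal_le_ofReal_iff (tsum_nonneg fun _ => by positivity)).1 hle

lemma part_bound {ι : Type} (e : HilbertBasis ι ℂ H) (A B P N : Op H) (hA : A.IsPositive)
    (hB : B.IsPositive) (hP : P.IsPositive) (hN : N.IsPositive) (hPN : P * N = 0)
    (h : P - N = A - B) (hs : Summable (fun i => (⟪e i, A (e i)⟫).re)) :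
    Summable (fun i => (⟪e i, P (e i)⟫).re) ∧
    ∑' i, (⟪e i, P (e i)⟫).re ≤ ∑' i, (⟪e i, A (e i)⟫).re := by
  let K : Submodule ℂ H := LinearMap.ker P.toLinearMap
  have hKc : IsClosed (K : Set H) := P.isClosed_ker
  haveI : CompleteSpace K := hKc.completeSpace_coe
  let Q : Op H := Kᗮ.starProjection
  have hQ : IsSelfAdjoint Q := isSelfAdjoint_starProjection Kᗮ
  have hc : ∀ x, ‖Q x‖ ≤ ‖x‖ := fun x => Kᗮ.norm_starProjection_apply_le x
  have hsub : ∀ x, P (x - Q x) = 0 := by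
    intro x
    have h1 : x - Q x ∈ Kᗮᗮ := Kᗮ.sub_starProjection_mem_orthogonal x
    rw [Submodule.orthogonal_orthogonal] at h1
    exact h1
  have hPQ : ∀ x, P (Q x) = P x := fun x => by
    have := hsub x
    rw [map_sub, sub_eq_zero] at this; exact this.symm
  have hNQ : ∀ x, ⟪Q x, N (Q x)⟫ = 0 := by
    intro x
    have h1 : N (Q x) ∈ K := by
      change (P * N) (Q x) = 0
      rw [hPN]; rfl
    have h2 : Q x ∈ Kᗮ := Kᗮ.starProjection_apply_mem x
    exact Submodule.inner_left_of_mem_orthogonal h1 h2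
  have hle : ∀ x, (⟪x, P x⟫).re ≤ (⟪Q x, A (Q x)⟫).re := by
    intro x
    have e1 : ⟪x, P x⟫ = ⟪Q x, P (Q x)⟫ := by
      rw [← hPQ x, ← hP.inner_left_eq_inner_right, ← hPQ x, hP.inner_left_eq_inner_right]
    have e2 : P (Q x) - N (Q x) = A (Q x) - B (Q x) := by
      have := congrArg (fun T : Op H => T (Q x)) h
      simpa using this
    have e3 : ⟪Q x, P (Q x)⟫ = ⟪Q x, A (Q x)⟫ - ⟪Q x, B (Q x)⟫ := by
      rw [← inner_sub_right, ← e2, inner_sub_right, hNQ, sub_zero]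
    have hb := hB.re_inner_nonneg_right (Q x)
    rw [e1, e3, Complex.sub_re]
    have : 0 ≤ (⟪Q x, B (Q x)⟫).re := hb
    linarith
  obtain ⟨h1, h2⟩ := compress e A Q hA hs hQ hc
  have h3 : Summable (fun i => (⟪e i, P (e i)⟫).re) :=
    h1.of_nonneg_of_le (fun i => hP.re_inner_nonneg_right (e i)) (fun i => hle (e i))
  exact ⟨h3, (h3.tsum_le_tsum (fun i => hle (e i)) h1).trans h2⟩

/-- The main trace norm estimate for differences of positive trace-class operators. -/
lemma traceNorm_sub {ι : Type} (e : HilbertBasis ι ℂ H) (A B : Op H) (hA : A.IsPositive)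
    (hB : B.IsPositive) (hsA : Summable (fun i => (⟪e i, A (e i)⟫).re))
    (hsB : Summable (fun i => (⟪e i, B (e i)⟫).re)) :
    traceNorm e (A - B) ≤ ∑' i, (⟪e i, A (e i)⟫).re + ∑' i, (⟪e i, B (e i)⟫).re ∧
    ∀ i, |(⟪e i, (A - B) (e i)⟫).re| ≤ traceNorm e (A - B) := by
  set D := A - B with hD
  have hDa : IsSelfAdjoint D := hA.isSelfAdjoint.sub hB.isSelfAdjoint
  have habs : CFC.sqrt (ContinuousLinearMap.adjoint D ∘L D) = D⁺ + D⁻ :=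
    (CFC.posPart_add_negPart D hDa).symm
  have hP : (D⁺).IsPositive :=
    (ContinuousLinearMap.nonneg_iff_isPositive _).1 (CFC.posPart_nonneg D)
  have hN : (D⁻).IsPositive :=
    (ContinuousLinearMap.nonneg_iff_isPositive _).1 (CFC.negPart_nonneg D)
  have hsubD : D⁺ - D⁻ = D := CFC.posPart_sub_negPart D hDa
  obtain ⟨p1, p2⟩ := part_bound e A B D⁺ D⁻ hA hB hP hN (CFC.posPart_mul_negPart D) hsubD hsA
  obtain ⟨n1, n2⟩ := part_bound e B A D⁻ D⁺ hB hA hN hP (CFC.negPart_mul_posPart D)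
    (by rw [← neg_sub, hsubD, hD, neg_sub]) hsB
  have ht : traceNorm e D = ∑' i, ((⟪e i, D⁺ (e i)⟫).re + (⟪e i, D⁻ (e i)⟫).re) := by
    unfold traceNorm
    rw [habs]
    refine tsum_congr fun i => ?_
    rw [ContinuousLinearMap.add_apply, inner_add_right, Complex.add_re]
  have hp0 : ∀ i, 0 ≤ (⟪e i, D⁺ (e i)⟫).re := fun i => hP.re_inner_nonneg_right (e i)
  have hn0 : ∀ i, 0 ≤ (⟪e i, D⁻ (e i)⟫).re := fun i => hN.re_inner_nonneg_right (e i)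
  constructor
  · rw [ht, p1.tsum_add n1]; exact add_le_add p2 n2
  · intro i
    rw [ht]
    refine le_trans ?_ ((p1.add n1).le_tsum i fun j _ => add_nonneg (hp0 j) (hn0 j))
    have : (⟪e i, D (e i)⟫).re = (⟪e i, D⁺ (e i)⟫).re - (⟪e i, D⁻ (e i)⟫).re := by
      conv_lhs => rw [← hsubD]
      rw [ContinuousLinearMap.sub_apply, inner_sub_right, Complex.sub_re]
    rw [this, abs_le]
    constructor <;> linarith [hp0 i, hn0 i]

/-- Positive trace class with trace `t`. -/
def PT {ι : Type} (e : HilbertBasis ι ℂ H) (A : Op H) (t : ℝ) : Prop :=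
  A.IsPositive ∧ HasSum (fun i => (⟪e i, A (e i)⟫).re) t

lemma PT.add {ι : Type} {e : HilbertBasis ι ℂ H} {A B : Op H} {s t : ℝ} (hA : PT e A s)
    (hB : PT e B t) : PT e (A + B) (s + t) := by
  refine ⟨hA.1.add hB.1, ?_⟩
  convert hA.2.add hB.2 using 2 with i
  simp [inner_add_right]

lemma real_smul_inner (c : ℝ) (A : Op H) (x y : H) : ⟪x, (c • A) y⟫ = (c : ℂ) * ⟪x, A y⟫ := by
  have : (c • A) y = (c : ℂ) • A y := by
    simp
  rw [this, inner_smul_right]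

lemma real_smul_re (c : ℝ) (A : Op H) (x y : H) : (⟪x, (c • A) y⟫).re = c * (⟪x, A y⟫).re := by
  rw [real_smul_inner, Complex.re_ofReal_mul]

lemma PT.smul {ι : Type} {e : HilbertBasis ι ℂ H} {A : Op H} {s c : ℝ} (hA : PT e A s)
    (hc : 0 ≤ c) : PT e (c • A) (c * s) := by
  refine ⟨?_, ?_⟩
  · have : c • A = (c : ℂ) • A := by ext x; simp
    rw [this]
    exact hA.1.smul_of_nonneg (by exact_mod_cast hc)
  · simp_rw [real_smul_re]
    exact hA.2.mul_left c

lemma PT.zero {ι : Type} {e : HilbertBasis ι ℂ H} : PT e (0 : Op H) 0 := by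
  refine ⟨ContinuousLinearMap.isPositive_zero, ?_⟩
  simpa using (hasSum_zero : HasSum (fun _ : ι => (0 : ℝ)) 0)

lemma PT.sum {ι κ : Type} {e : HilbertBasis ι ℂ H} {A : κ → Op H} {t : κ → ℝ} (s : Finset κ)
    (h : ∀ k ∈ s, PT e (A k) (t k)) : PT e (∑ k ∈ s, A k) (∑ k ∈ s, t k) := by
  classical
  induction s using Finset.induction_on with
  | empty => simpa using PT.zero
  | insert a s ha ih =>
    rw [Finset.sum_insert ha, Finset.sum_insert ha]
    exact (h a (Finset.mem_insert_self a s)).add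
      (ih fun k hk => h k (Finset.mem_insert_of_mem hk))

lemma projv_apply (x y : H) : projv x y = ⟪x, y⟫ • x := by
  simp [projv]

lemma projv_inner (x y : H) : ⟪y, projv x y⟫ = ((‖⟪y, x⟫‖ ^ 2 : ℝ) : ℂ) := by
  rw [projv_apply, inner_smul_right, ← inner_conj_symm x y, ← Complex.normSq_eq_conj_mul_self,
    Complex.normSq_eq_norm_sq]

lemma PT.projv {ι : Type} (e : HilbertBasis ι ℂ H) (x : H) : PT e (projv x) (‖x‖ ^ 2) := by
  refine ⟨?_, ?_⟩
  · rw [ContinuousLinearMap.isPositive_def']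
    refine ⟨?_, fun y => ?_⟩
    · rw [ContinuousLinearMap.isSelfAdjoint_iff_isSymmetric]
      intro y z
      change ⟪_root_.projv x y, z⟫ = ⟪y, _root_.projv x z⟫
      rw [projv_apply, projv_apply, inner_smul_left, inner_smul_right, inner_conj_symm]
      ring
    · rw [ContinuousLinearMap.reApplyInnerSelf_apply, inner_re_symm, projv_inner]
      simp only [RCLike.re_to_complex, Complex.ofReal_re]
      positivity
  · simp_rw [projv_inner, Complex.ofReal_re]
    exact parseval_hasSum e x

lemma PT.traceNorm_sub {ι : Type} {e : HilbertBasis ι ℂ H} {A B : Op H} {s t : ℝ}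
    (hA : PT e A s) (hB : PT e B t) :
    traceNorm e (A - B) ≤ s + t ∧
    ∀ i, |(⟪e i, (A - B) (e i)⟫).re| ≤ traceNorm e (A - B) := by
  have := _root_.traceNorm_sub e A B hA.1 hB.1 hA.2.summable hB.2.summable
  rwa [hA.2.tsum_eq, hB.2.tsum_eq] at this

/-- Poisson weights. -/
def po (r : ℝ) (m : ℕ) : ℝ := Real.exp (-r) * r ^ m / m.factorial

lemma po_nonneg {r : ℝ} (hr : 0 ≤ r) (m : ℕ) : 0 ≤ po r m := by unfold po; positivity

lemma po_hasSum (r : ℝ) : HasSum (po r) 1 := by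
  have h := (NormedSpace.expSeries_div_hasSum_exp r).mul_left (Real.exp (-r))
  rw [← Real.exp_eq_exp_ℝ, ← Real.exp_add, neg_add_cancel, Real.exp_zero] at h
  have h2 : po r = fun m : ℕ => Real.exp (-r) * (r ^ m / m.factorial) := by
    funext m; unfold po; ring
  rw [h2]
  exact h

lemma po_max {r : ℝ} (hr : 0 ≤ r) (n : ℕ) : po r n ≤ po n n := by
  unfold po
  have key : Real.exp (-r) * r ^ n ≤ Real.exp (-n) * (n : ℝ) ^ n := by
    rcases Nat.eq_zero_or_pos n with rfl | hn
    · simpa using hr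
    have hn' : (0 : ℝ) < n := by exact_mod_cast hn
    have h1 : r / n ≤ Real.exp (r / n - 1) := by
      have := Real.add_one_le_exp (r / n - 1); linarith
    have h2 : (r / n) ^ n ≤ Real.exp (r / n - 1) ^ n := by
      gcongr
    rw [← Real.exp_nat_mul, div_pow, div_le_iff₀ (by positivity)] at h2
    have h3 : (n : ℝ) * (r / n - 1) = r - n := by field_simp
    rw [h3] at h2
    calc Real.exp (-r) * r ^ n ≤ Real.exp (-r) * (Real.exp (r - n) * n ^ n) := by gcongr
      _ = _ := by rw [← mul_assoc, ← Real.exp_add]; congr 2; ring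
  gcongr

/-- Coefficients of a coherent state. -/
def cf (α : ℂ) (m : ℕ) : ℂ :=
  Complex.exp (-((‖α‖ : ℂ) ^ 2 / 2)) * α ^ m / (Real.sqrt (Nat.factorial m) : ℂ)

lemma cf_norm_sq (α : ℂ) (m : ℕ) : ‖cf α m‖ ^ 2 = po (‖α‖ ^ 2) m := by
  unfold cf po
  have h1 : ‖Complex.exp (-((‖α‖ : ℂ) ^ 2 / 2))‖ = Real.exp (-(‖α‖ ^ 2 / 2)) := by
    rw [Complex.norm_exp]; congr 1; norm_cast
  rw [norm_div, norm_mul, h1, norm_pow, Complex.norm_real, div_pow, mul_pow, Real.norm_eq_abs,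
    sq_abs, Real.sq_sqrt (by positivity), ← Real.exp_nat_mul, ← pow_mul, ← pow_mul, mul_comm m 2]
  congr 3
  push_cast; ring

lemma coh_exists (e : HilbertBasis ℕ ℂ H) (α : ℂ) :
    HasSum (fun m => cf α m • e m) (coh e α) ∧ ∀ m, ⟪e m, coh e α⟫ = cf α m := by
  have hs : Summable (fun m => ‖cf α m‖ ^ 2) := by
    simp_rw [cf_norm_sq]; exact (po_hasSum _).summable
  have hmem : Memℓp (cf α) 2 := by
    rw [memℓp_gen_iff (by norm_num)]
    simpa using hs
  let f : lp (fun _ : ℕ => ℂ) 2 := ⟨cf α, hmem⟩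
  have h := e.hasSum_repr_symm f
  have h2 : coh e α = e.repr.symm f := h.tsum_eq
  rw [h2]
  refine ⟨h, fun m => ?_⟩
  rw [← e.repr_apply_apply, LinearIsometryEquiv.apply_symm_apply]

lemma coh_inner (e : HilbertBasis ℕ ℂ H) (α : ℂ) (m : ℕ) : ⟪e m, coh e α⟫ = cf α m :=
  (coh_exists e α).2 m

lemma hull_bound (e : HilbertBasis ℕ ℂ H) (n : ℕ) {T : Op H}
    (hT : T ∈ convexHull ℝ {T : Op H | ∃ α : ℂ, T = projv (coh e α)}) :
    (∃ t, PT e T t) ∧ (⟪e n, T (e n)⟫).re ≤ po n n := by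
  have hconv : Convex ℝ {T : Op H | (∃ t, PT e T t) ∧ (⟪e n, T (e n)⟫).re ≤ po n n} := by
    rintro A ⟨⟨s, hA⟩, hA'⟩ B ⟨⟨t, hB⟩, hB'⟩ a b ha hb hab
    refine ⟨⟨_, (hA.smul ha).add (hB.smul hb)⟩, ?_⟩
    have : (⟪e n, (a • A + b • B) (e n)⟫).re
        = a * (⟪e n, A (e n)⟫).re + b * (⟪e n, B (e n)⟫).re := by
      rw [add_apply, inner_add_right, Complex.add_re, real_smul_re, real_smul_re]
    rw [this]
    calc _ ≤ a * po n n + b * po n n := by gcongr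
      _ = _ := by rw [← add_mul, hab, one_mul]
  refine convexHull_min ?_ hconv hT
  rintro _ ⟨α, rfl⟩
  refine ⟨⟨_, PT.projv e _⟩, ?_⟩
  rw [projv_inner, coh_inner, cf_norm_sq, Complex.ofReal_re]
  exact po_max (by positivity) n

lemma basis_inner {ι : Type} [DecidableEq ι] (e : HilbertBasis ι ℂ H) (i j : ι) :
    ⟪e i, e j⟫ = if i = j then 1 else 0 :=
  orthonormal_iff_ite.1 e.orthonormal i j

lemma lower_bound (e : HilbertBasis ℕ ℂ H) (n : ℕ) (lam : ℝ) (hl : 0 ≤ lam) (τ : Op H)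
    (hτ : IsDensity e τ) (hC : ((1 + lam)⁻¹ : ℝ) • (projv (e n) + lam • τ) ∈ ClassicalStates e) :
    (1 + lam)⁻¹ ≤ po n n := by
  obtain ⟨u, hu, hlim⟩ := hC
  have hpτ : PT e τ _ := ⟨hτ.1, hτ.2.1.hasSum⟩
  have hσ := ((PT.projv e (e n)).add (hpτ.smul hl)).smul (c := (1 + lam)⁻¹) (by positivity)
  set σ := ((1 + lam)⁻¹ : ℝ) • (projv (e n) + lam • τ) with hσd
  have hσn : (1 + lam)⁻¹ ≤ (⟪e n, σ (e n)⟫).re := by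
    rw [hσd, real_smul_re, add_apply, inner_add_right, Complex.add_re, real_smul_re, projv_inner,
      basis_inner, if_pos rfl]
    have : 0 ≤ (⟪e n, τ (e n)⟫).re := hτ.1.re_inner_nonneg_right (e n)
    have h2 := mul_nonneg hl this
    have h3 : 0 ≤ (1 + lam)⁻¹ := by positivity
    simp only [norm_one, one_pow, Complex.ofReal_one, Complex.one_re]
    nlinarith
  have hk : ∀ k, (1 + lam)⁻¹ - po n n ≤ traceNorm e (u k - σ) := by
    intro k
    obtain ⟨⟨t, ht⟩, h2⟩ := hull_bound e n (hu k)
    have h3 := (ht.traceNorm_sub hσ).2 n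
    rw [sub_apply, inner_sub_right, Complex.sub_re] at h3
    have h4 := neg_abs_le ((⟪e n, (u k) (e n)⟫).re - (⟪e n, σ (e n)⟫).re)
    linarith
  have := ge_of_tendsto' hlim hk
  linarith

/-- Diagonal operators. -/
def diagOp (e : HilbertBasis ℕ ℂ H) (p : ℕ → ℝ) : Op H := ∑' m, p m • projv (e m)

lemma diagOp_hasSum (e : HilbertBasis ℕ ℂ H) {p : ℕ → ℝ} (hp : ∀ m, 0 ≤ p m)
    (hs : Summable p) : HasSum (fun m => p m • projv (e m)) (diagOp e p) := by
  refine Summable.hasSum (Summable.of_norm_bounded hs fun m => ?_)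
  have h1 : ‖projv (e m)‖ ≤ 1 := by
    refine ContinuousLinearMap.opNorm_le_bound _ zero_le_one fun x => ?_
    rw [projv_apply, norm_smul]
    have h2 := norm_inner_le_norm (𝕜 := ℂ) (e m) x
    have h3 : ‖e m‖ = 1 := e.orthonormal.1 m
    rw [h3] at h2 ⊢
    linarith
  rw [norm_smul, Real.norm_of_nonneg (hp m)]
  exact mul_le_of_le_one_right (hp m) h1

lemma diagOp_PT (e : HilbertBasis ℕ ℂ H) {p : ℕ → ℝ} (hp : ∀ m, 0 ≤ p m)
    {t : ℝ} (hs : HasSum p t) : PT e (diagOp e p) t := by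
  have h := diagOp_hasSum e hp hs.summable
  have key : ∀ x, HasSum (fun m => ((p m * ‖⟪x, e m⟫‖ ^ 2 : ℝ) : ℂ)) ⟪x, diagOp e p x⟫ := by
    intro x
    have h1 : HasSum (fun m => ⟪x, (p m • projv (e m)) x⟫) ⟪x, diagOp e p x⟫ :=
      h.mapL ((innerSL ℂ x) ∘L (ContinuousLinearMap.apply ℂ H x))
    convert h1 using 2 with m
    rw [real_smul_inner, projv_inner]
    push_cast; ring
  have key2 : ∀ x, HasSum (fun m => p m * ‖⟪x, e m⟫‖ ^ 2) (⟪x, diagOp e p x⟫).re := by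
    intro x
    have := Complex.hasSum_re (key x)
    simpa only [Complex.ofReal_re] using this
  refine ⟨?_, ?_⟩
  · rw [ContinuousLinearMap.isPositive_iff_complex]
    intro x
    have h0 : 0 ≤ (⟪x, diagOp e p x⟫).re :=
      (key2 x).nonneg fun m => mul_nonneg (hp m) (by positivity)
    have hr : (((⟪x, diagOp e p x⟫).re : ℝ) : ℂ) = ⟪x, diagOp e p x⟫ :=
      (Complex.hasSum_ofReal.2 (key2 x)).unique (key x)
    have hc : ⟪diagOp e p x, x⟫ = ⟪x, diagOp e p x⟫ := by
      rw [← inner_conj_symm, ← hr, Complex.conj_ofReal]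
    rw [hc]
    exact ⟨hr, h0⟩
  · convert hs using 2 with i
    refine (key2 (e i)).unique ?_
    convert hasSum_single i ?_ using 1
    · rw [basis_inner, if_pos rfl]; simp
    · intro m hm
      rw [basis_inner, if_neg (Ne.symm hm)]; simp

/-- Tail of a sequence. -/
def tl (k : ℕ) (p : ℕ → ℝ) (m : ℕ) : ℝ := if m < k then 0 else p m

lemma tl_hasSum (k : ℕ) {p : ℕ → ℝ} {t : ℝ} (hs : HasSum p t) :
    HasSum (tl k p) (t - ∑ m ∈ Finset.range k, p m) := by
  have h1 : HasSum (fun m => if m < k then p m else 0) (∑ m ∈ Finset.range k, p m) := by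
    convert hasSum_sum_of_ne_finset_zero (s := Finset.range k) ?_ using 1
    · exact Finset.sum_congr rfl fun m hm => (if_pos (Finset.mem_range.1 hm)).symm
    · intro b hb
      rw [Finset.mem_range] at hb
      rw [if_neg hb]
    · infer_instance
  have h2 : tl k p = fun m => p m - (if m < k then p m else 0) := by
    funext m; unfold tl; split_ifs <;> simp
  rw [h2]
  exact hs.sub h1

lemma tl_nonneg (k : ℕ) {p : ℕ → ℝ} (hp : ∀ m, 0 ≤ p m) (m : ℕ) : 0 ≤ tl k p m := by
  unfold tl; split_ifs
  · exact le_rfl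
  · exact hp m

lemma diagOp_split (e : HilbertBasis ℕ ℂ H) {p : ℕ → ℝ} (hp : ∀ m, 0 ≤ p m)
    (hs : Summable p) (k : ℕ) :
    diagOp e p = ∑ m ∈ Finset.range k, p m • projv (e m) + diagOp e (tl k p) := by
  have h := diagOp_hasSum e hp hs
  have ht := diagOp_hasSum e (tl_nonneg k hp) (tl_hasSum k hs.hasSum).summable
  have h1 : HasSum (fun m => if m < k then p m • projv (e m) else 0)
      (∑ m ∈ Finset.range k, p m • projv (e m)) := by
    convert hasSum_sum_of_ne_finset_zero (s := Finset.range k) ?_ using 1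
    · exact Finset.sum_congr rfl fun m hm => (if_pos (Finset.mem_range.1 hm)).symm
    · intro b hb
      rw [Finset.mem_range] at hb
      rw [if_neg hb]
    · infer_instance
  refine h.unique ?_
  convert h1.add ht using 2 with m
  unfold tl; split_ifs <;> simp

lemma projv_sub (x y : H) {r : ℝ} (hr : 0 < r) :
    projv x - projv y = (1 / 4 : ℝ) • projv ((r : ℂ) • (x + y) + (r⁻¹ : ℂ) • (x - y))
      - (1 / 4 : ℝ) • projv ((r : ℂ) • (x + y) - (r⁻¹ : ℂ) • (x - y)) := by
  have hr' : (r : ℂ) ≠ 0 := by exact_mod_cast hr.ne'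
  have hsm : ∀ T : Op H, ((1 / 4 : ℝ) • T) = (1 / 4 : ℂ) • T := by
    intro T; ext z
    simp only [smul_apply]
    rw [← Complex.coe_smul]; norm_num
  ext z
  rw [hsm, hsm]
  simp only [sub_apply, smul_apply, projv_apply, inner_add_left,
    inner_sub_left, inner_smul_left, map_inv₀, Complex.conj_ofReal]
  match_scalars <;> field_simp <;> ring

lemma root_sum {k : ℕ} {ω : ℂ} (hω : IsPrimitiveRoot ω k) (hn : ‖ω‖ = 1) {l m : ℕ}
    (hl : l < k) (hm : m < k) :
    ∑ j ∈ Finset.range k, (starRingEnd ℂ) (ω ^ (j * l)) * ω ^ (j * m) =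
      if l = m then (k : ℂ) else 0 := by
  have hc : (starRingEnd ℂ) ω * ω = 1 := by
    rw [← Complex.normSq_eq_conj_mul_self, Complex.normSq_eq_norm_sq, hn]; simp
  have hcl : ∀ l : ℕ, (starRingEnd ℂ) ω ^ l * ω ^ l = 1 := fun l => by
    rw [← mul_pow, hc, one_pow]
  split_ifs with h
  · subst h
    simp_rw [map_pow, hcl]
    simp
  · set q := (starRingEnd ℂ) ω ^ l * ω ^ m with hq
    have hq1 : q ≠ 1 := by
      intro h1
      have h2 : ω ^ m = ω ^ l := by
        calc ω ^ m = ((starRingEnd ℂ) ω ^ l * ω ^ l) * ω ^ m := by rw [hcl, one_mul]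
          _ = q * ω ^ l := by rw [hq]; ring
          _ = ω ^ l := by rw [h1, one_mul]
      exact h (hω.pow_inj hm hl h2).symm
    have hqk : q ^ k = 1 := by
      rw [hq, mul_pow, ← pow_mul, ← pow_mul, mul_comm l, mul_comm m, pow_mul, pow_mul,
        ← map_pow, hω.pow_eq_one]
      simp
    have : ∀ j, (starRingEnd ℂ) (ω ^ (j * l)) * ω ^ (j * m) = q ^ j := by
      intro j
      rw [hq, map_pow, mul_pow, ← pow_mul, ← pow_mul, mul_comm l, mul_comm m]
    simp_rw [this]
    rw [geom_sum_eq hq1, hqk]; simp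

lemma avg_proj (e : HilbertBasis ℕ ℂ H) {k : ℕ} {ω : ℂ} (hω : IsPrimitiveRoot ω k)
    (hn : ‖ω‖ = 1) (b : ℕ → ℂ) :
    ∑ j ∈ Finset.range k, projv (∑ m ∈ Finset.range k, (b m * ω ^ (j * m)) • e m) =
      (k : ℝ) • ∑ m ∈ Finset.range k, (‖b m‖ ^ 2) • projv (e m) := by
  ext z
  have hR : ((k : ℝ) • ∑ m ∈ Finset.range k, (‖b m‖ ^ 2) • projv (e m)) z
      = ∑ m ∈ Finset.range k, ((k : ℂ) * (((starRingEnd ℂ) (b m) * b m) * ⟪e m, z⟫)) • e m := by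
    rw [smul_apply, sum_apply, Finset.smul_sum]
    refine Finset.sum_congr rfl fun m _ => ?_
    rw [smul_apply, projv_apply, ← Complex.coe_smul, ← Complex.coe_smul, smul_smul, smul_smul,
      ← Complex.normSq_eq_conj_mul_self, Complex.normSq_eq_norm_sq]
    push_cast
    rw [mul_assoc]
  rw [hR, sum_apply]
  simp_rw [projv_apply, sum_inner, inner_smul_left, Finset.smul_sum, smul_smul]
  rw [Finset.sum_comm]
  refine Finset.sum_congr rfl fun m hm => ?_
  rw [← Finset.sum_smul]
  congr 1
  simp_rw [Finset.sum_mul]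
  rw [Finset.sum_comm]
  have h1 : ∀ l ∈ Finset.range k, ∑ j ∈ Finset.range k,
      (starRingEnd ℂ) (b l * ω ^ (j * l)) * ⟪e l, z⟫ * (b m * ω ^ (j * m)) =
      if l = m then (k : ℂ) * (((starRingEnd ℂ) (b m) * b m) * ⟪e m, z⟫) else 0 := by
    intro l hl
    have h2 := root_sum hω hn (Finset.mem_range.1 hl) (Finset.mem_range.1 hm)
    calc _ = ((starRingEnd ℂ) (b l) * b m * ⟪e l, z⟫) * ∑ j ∈ Finset.range k,
          (starRingEnd ℂ) (ω ^ (j * l)) * ω ^ (j * m) := by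
          rw [Finset.mul_sum]
          refine Finset.sum_congr rfl fun j _ => ?_
          rw [map_mul]; ring
      _ = _ := by
          rw [h2]
          split_ifs with h
          · subst h; ring
          · ring
  rw [Finset.sum_congr rfl h1]
  simp [Finset.mem_range.1 hm]

/-- The uniform average of `k` coherent projectors on a circle. -/
def circ (e : HilbertBasis ℕ ℂ H) (α ω : ℂ) (k : ℕ) : Op H :=
  (k : ℝ)⁻¹ • ∑ j ∈ Finset.range k, projv (coh e (α * ω ^ j))

lemma circ_mem (e : HilbertBasis ℕ ℂ H) (α ω : ℂ) {k : ℕ} (hk : 0 < k) :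
    circ e α ω k ∈ convexHull ℝ {T : Op H | ∃ α : ℂ, T = projv (coh e α)} := by
  unfold circ
  rw [Finset.smul_sum]
  refine (convex_convexHull ℝ _).sum_mem (fun _ _ => by positivity) ?_ ?_
  · have : (k : ℝ) ≠ 0 := by positivity
    simp [this]
  · intro j _
    exact subset_convexHull ℝ _ ⟨_, rfl⟩

lemma circ_bound (e : HilbertBasis ℕ ℂ H) (α : ℂ) {ω : ℂ} {k : ℕ} (hk : 0 < k)
    (hω : IsPrimitiveRoot ω k) (hn : ‖ω‖ = 1) {t : ℝ} (ht : 0 < t) {δ : ℝ}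
    (hδ : HasSum (tl k (po (‖α‖ ^ 2))) δ) :
    traceNorm e (circ e α ω k - diagOp e (po (‖α‖ ^ 2))) ≤ (1 / 2) * (4 * t + δ / t) + δ := by
  set p := po (‖α‖ ^ 2) with hp
  have hp0 : ∀ m, 0 ≤ p m := po_nonneg (by positivity)
  have hk0 : (k : ℝ) ≠ 0 := by positivity
  set r := Real.sqrt t with hr
  have hr0 : 0 < r := Real.sqrt_pos.2 ht
  have hr2 : r ^ 2 = t := Real.sq_sqrt ht.le
  set a : ℕ → H := fun j => coh e (α * ω ^ j) with ha
  set w : ℕ → H := fun j => ∑ m ∈ Finset.range k, (cf α m * ω ^ (j * m)) • e m with hw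
  have hna : ∀ j, ‖α * ω ^ j‖ = ‖α‖ := fun j => by rw [norm_mul, norm_pow, hn]; simp
  have hcf : ∀ j m, cf (α * ω ^ j) m = cf α m * ω ^ (j * m) := by
    intro j m
    unfold cf
    rw [hna, mul_pow, pow_mul]; ring
  have hai : ∀ j m, ⟪e m, a j⟫ = cf α m * ω ^ (j * m) := fun j m => by
    rw [ha, coh_inner, hcf]
  have hwi : ∀ j m, ⟪e m, w j⟫ = if m < k then cf α m * ω ^ (j * m) else 0 := by
    intro j m
    simp only [hw, inner_sum, inner_smul_right, basis_inner]
    simp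
  have hcn : ∀ j m, ‖cf α m * ω ^ (j * m)‖ ^ 2 = p m := by
    intro j m
    rw [norm_mul, norm_pow, hn, one_pow, mul_one, cf_norm_sq]
  have hnorma : ∀ j, ‖a j‖ ^ 2 = 1 := by
    intro j
    refine (parseval_hasSum e (a j)).unique ?_
    simp_rw [hai, hcn]
    exact po_hasSum _
  have hnormw : ∀ j, ‖w j‖ ^ 2 ≤ 1 := by
    intro j
    refine hasSum_le (fun m => ?_) (parseval_hasSum e (w j)) (po_hasSum (‖α‖ ^ 2))
    rw [hwi]
    split_ifs
    · rw [hcn]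
    · simpa using hp0 m
  have hnormd : ∀ j, ‖a j - w j‖ ^ 2 = δ := by
    intro j
    refine (parseval_hasSum e (a j - w j)).unique ?_
    convert hδ using 2 with m
    rw [inner_sub_right, hai, hwi]
    unfold tl
    split_ifs
    · simp
    · rw [sub_zero, hcn]
  have hnorms : ∀ j, ‖a j + w j‖ ^ 2 ≤ 4 := by
    intro j
    have h1 := norm_add_le (a j) (w j)
    have h2 : ‖a j‖ ≤ 1 := by nlinarith [hnorma j, norm_nonneg (a j)]
    have h3 : ‖w j‖ ≤ 1 := by nlinarith [hnormw j, norm_nonneg (w j)]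
    nlinarith [norm_nonneg (a j + w j)]
  set x : ℕ → H := fun j => (r : ℂ) • (a j + w j) + (r⁻¹ : ℂ) • (a j - w j) with hx
  set y : ℕ → H := fun j => (r : ℂ) • (a j + w j) - (r⁻¹ : ℂ) • (a j - w j) with hy
  have hxy : ∀ j, ‖x j‖ ^ 2 + ‖y j‖ ^ 2 ≤ 2 * (4 * t + δ / t) := by
    intro j
    have h := parallelogram_law_with_norm ℂ ((r : ℂ) • (a j + w j)) ((r⁻¹ : ℂ) • (a j - w j))
    have h1 : ‖(r : ℂ) • (a j + w j)‖ ^ 2 ≤ 4 * t := by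
      rw [norm_smul, mul_pow, Complex.norm_real, Real.norm_of_nonneg hr0.le, hr2]
      nlinarith [hnorms j]
    have h2 : ‖(r⁻¹ : ℂ) • (a j - w j)‖ ^ 2 = δ / t := by
      rw [norm_smul, mul_pow, norm_inv, Complex.norm_real, Real.norm_of_nonneg hr0.le, inv_pow,
        hr2, hnormd]
      ring
    simp only [hx, hy]
    nlinarith
  have hA : PT e ((k : ℝ)⁻¹ • ∑ j ∈ Finset.range k, (1 / 4 : ℝ) • projv (x j)) _ :=
    (PT.sum (Finset.range k) fun j _ => (PT.projv e (x j)).smul (c := 1 / 4) (by norm_num)).smul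
      (by positivity)
  have hB : PT e ((k : ℝ)⁻¹ • ∑ j ∈ Finset.range k, (1 / 4 : ℝ) • projv (y j)) _ :=
    (PT.sum (Finset.range k) fun j _ => (PT.projv e (y j)).smul (c := 1 / 4) (by norm_num)).smul
      (by positivity)
  have hT : PT e (diagOp e (tl k p)) δ := diagOp_PT e (tl_nonneg k hp0) hδ
  have hmain := (hA.traceNorm_sub (hB.add hT)).1
  have hEq : circ e α ω k - diagOp e p =
      ((k : ℝ)⁻¹ • ∑ j ∈ Finset.range k, (1 / 4 : ℝ) • projv (x j)) -
      (((k : ℝ)⁻¹ • ∑ j ∈ Finset.range k, (1 / 4 : ℝ) • projv (y j)) + diagOp e (tl k p)) := by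
    have h1 : ∑ m ∈ Finset.range k, p m • projv (e m) =
        (k : ℝ)⁻¹ • ∑ j ∈ Finset.range k, projv (w j) := by
      rw [hw, avg_proj e hω hn, smul_smul, inv_mul_cancel₀ hk0, one_smul]
      simp_rw [cf_norm_sq, hp]
    have h2 : ∀ j ∈ Finset.range k, projv (a j) - projv (w j) = _ := fun j _ =>
      projv_sub (a j) (w j) hr0
    have h3 := Finset.sum_congr rfl h2
    rw [Finset.sum_sub_distrib, Finset.sum_sub_distrib] at h3
    rw [diagOp_split e hp0 (po_hasSum _).summable k, h1, ← sub_sub, ← sub_sub, ← smul_sub,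
      ← h3, smul_sub]
    rfl
  rw [hEq]
  refine hmain.trans ?_
  have h5 : ∑ j ∈ Finset.range k, (1 / 4 * ‖x j‖ ^ 2) + ∑ j ∈ Finset.range k, (1 / 4 * ‖y j‖ ^ 2)
      ≤ k * ((1 / 2) * (4 * t + δ / t)) := by
    rw [← Finset.sum_add_distrib]
    calc _ ≤ ∑ j ∈ Finset.range k, (1 / 2) * (4 * t + δ / t) :=
          Finset.sum_le_sum fun j _ => by linarith [hxy j]
      _ = _ := by simp
  have h6 : (k : ℝ)⁻¹ * (∑ j ∈ Finset.range k, (1 / 4 * ‖x j‖ ^ 2)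
      + ∑ j ∈ Finset.range k, (1 / 4 * ‖y j‖ ^ 2)) ≤ (1 / 2) * (4 * t + δ / t) := by
    rw [inv_mul_le_iff₀ (by positivity)]; exact h5
  rw [mul_add] at h6
  linarith

lemma diag_classical (e : HilbertBasis ℕ ℂ H) (n : ℕ) :
    diagOp e (po n) ∈ ClassicalStates e := by
  set α : ℂ := (Real.sqrt n : ℂ) with hα
  have hα2 : ‖α‖ ^ 2 = n := by
    rw [hα, Complex.norm_real, Real.norm_of_nonneg (Real.sqrt_nonneg _), Real.sq_sqrt (by positivity)]
  set ω : ℕ → ℂ := fun k => Complex.exp (2 * Real.pi * Complex.I / ((k + 1 : ℕ) : ℂ)) with hω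
  have hprim : ∀ k, IsPrimitiveRoot (ω k) (k + 1) := fun k =>
    Complex.isPrimitiveRoot_exp (k + 1) (Nat.succ_ne_zero k)
  have hnorm : ∀ k, ‖ω k‖ = 1 := fun k => (hprim k).norm'_eq_one (Nat.succ_ne_zero k)
  refine ⟨fun k => circ e α (ω k) (k + 1), fun k => circ_mem e α (ω k) (Nat.succ_pos k), ?_⟩
  set δ : ℕ → ℝ := fun k => 1 - ∑ m ∈ Finset.range (k + 1), po n m with hδ
  have hδs : ∀ k, HasSum (tl (k + 1) (po n)) (δ k) := fun k => tl_hasSum (k + 1) (po_hasSum n)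
  have hδ0 : ∀ k, 0 ≤ δ k := fun k =>
    (hδs k).nonneg (tl_nonneg _ (po_nonneg (by positivity)))
  have hδlim : Tendsto δ atTop (nhds 0) := by
    have h := ((po_hasSum n).tendsto_sum_nat.comp (tendsto_add_atTop_nat 1)).const_sub 1
    simpa [hδ, Function.comp_def] using h
  set t : ℕ → ℝ := fun k => Real.sqrt (δ k) + 1 / ((k : ℝ) + 1) with ht
  have htpos : ∀ k, 0 < t k := fun k => by positivity
  have hsq : Tendsto (fun k => Real.sqrt (δ k)) atTop (nhds 0) := by
    simpa using hδlim.sqrt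
  have htlim : Tendsto t atTop (nhds 0) := by
    simpa [ht] using hsq.add tendsto_one_div_add_atTop_nhds_zero_nat
  have hb : ∀ k, traceNorm e (circ e α (ω k) (k + 1) - diagOp e (po n)) ≤
      (1 / 2) * (4 * t k + Real.sqrt (δ k)) + δ k := by
    intro k
    have h := circ_bound e α (Nat.succ_pos k) (hprim k) (hnorm k) (htpos k) (δ := δ k)
      (by rw [hα2]; exact hδs k)
    rw [hα2] at h
    have h2 : δ k / t k ≤ Real.sqrt (δ k) := by
      rw [div_le_iff₀ (htpos k)]
      have h3 := Real.mul_self_sqrt (hδ0 k)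
      have h4 : Real.sqrt (δ k) ≤ t k := by
        simp only [ht]; linarith [show (0 : ℝ) ≤ 1 / ((k : ℝ) + 1) by positivity]
      nlinarith [Real.sqrt_nonneg (δ k)]
    linarith
  have h0 : ∀ k, 0 ≤ traceNorm e (circ e α (ω k) (k + 1) - diagOp e (po n)) := by
    intro k
    obtain ⟨⟨s, hs⟩, -⟩ := hull_bound e 0 (circ_mem e α (ω k) (Nat.succ_pos k))
    exact (abs_nonneg _).trans
      ((hs.traceNorm_sub (diagOp_PT e (po_nonneg (by positivity)) (po_hasSum n))).2 0)
  refine squeeze_zero h0 hb ?_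
  have hfin := (((htlim.const_mul 4).add hsq).const_mul (1 / 2)).add hδlim
  rw [show (1 / 2 : ℝ) * (4 * 0 + 0) + 0 = 0 by norm_num] at hfin
  exact hfin

lemma PT.isDensity {e : HilbertBasis ℕ ℂ H} {A : Op H} (h : PT e A 1) : IsDensity e A := by
  refine ⟨h.1, h.2.summable, ?_⟩
  unfold trB
  have h1 : ∀ i, ⟪e i, A (e i)⟫ = (((⟪e i, A (e i)⟫).re : ℝ) : ℂ) := by
    intro i
    have h2 := h.1.inner_nonneg_right (e i)
    rw [Complex.nonneg_iff] at h2
    apply Complex.ext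
    · simp
    · simp [← h2.2]
  rw [tsum_congr h1, (Complex.hasSum_ofReal.2 h.2).tsum_eq]; simp

lemma po_pos_self (n : ℕ) : 0 < po n n := by
  rcases Nat.eq_zero_or_pos n with rfl | hn
  · simp [po]
  · have : (0 : ℝ) < n := by exact_mod_cast hn
    unfold po; positivity

lemma po_inv (n : ℕ) : Real.exp n * (Nat.factorial n : ℝ) / (n : ℝ) ^ n = (po n n)⁻¹ := by
  unfold po
  rw [Real.exp_neg]
  have := Real.exp_pos n
  field_simp

lemma po_le_one (n : ℕ) : po n n ≤ 1 :=
  le_hasSum (po_hasSum n) n fun m _ => po_nonneg (by positivity) m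

lemma feasible (e : HilbertBasis ℕ ℂ H) (n : ℕ) : ∃ lam : ℝ, 0 ≤ lam ∧ ∃ τ : Op H,
    IsDensity e τ ∧ ((1 + lam)⁻¹ : ℝ) • (projv (e n) + lam • τ) ∈ ClassicalStates e ∧
    1 + lam = (po n n)⁻¹ := by
  have hp := po_pos_self n
  have hR : 1 ≤ (po n n)⁻¹ := (one_le_inv₀ hp).2 (po_le_one n)
  have hp0 : ∀ m, 0 ≤ po n m := po_nonneg (by positivity)
  have hdiag := diagOp_hasSum e hp0 (po_hasSum n).summable
  have hsingle : HasSum (fun m => if m = n then projv (e m) else 0) (projv (e n)) := by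
    convert hasSum_single n ?_ using 1
    · simp
    · intro m hm; rw [if_neg hm]
  refine ⟨(po n n)⁻¹ - 1, by linarith, ?_⟩
  rcases eq_or_lt_of_le hR with h1 | h1
  · refine ⟨projv (e 0), ?_, ?_, by ring⟩
    · apply PT.isDensity
      convert PT.projv e (e 0) using 1
      rw [e.orthonormal.1 0]; norm_num
    · rw [← h1]
      have hpn : po n n = 1 := by rw [← inv_inv (po n n), ← h1, inv_one]
      have h0 : ∀ m, m ≠ n → po n m = 0 := by
        intro m hm
        have h2 := sum_le_hasSum {m, n} (fun i _ => hp0 i) (po_hasSum n)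
        rw [Finset.sum_pair hm, hpn] at h2
        linarith [hp0 m]
      have h2 : diagOp e (po n) = projv (e n) := by
        refine hdiag.unique ?_
        convert hsingle using 2 with m
        split_ifs with hm
        · rw [hm, hpn, one_smul]
        · rw [h0 m hm, zero_smul]
      have h3 := diag_classical e n
      rw [h2] at h3
      simpa using h3
  · set R := (po n n)⁻¹ with hRd
    have hl : 0 < R - 1 := by linarith
    set q : ℕ → ℝ := fun m => if m = n then 0 else (R - 1)⁻¹ * (R * po n m) with hq
    have hq0 : ∀ m, 0 ≤ q m := by
      intro m
      have h5 : 0 ≤ R := by linarith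
      have h6 := hp0 m
      simp only [hq]
      split_ifs
      · exact le_rfl
      · positivity
    have hRp : R * po n n = 1 := inv_mul_cancel₀ hp.ne'
    have hqs : HasSum q 1 := by
      have h2 : HasSum (fun m => if m = n then (1 : ℝ) else 0) 1 := hasSum_ite_eq n 1
      have h3 := (((po_hasSum n).mul_left R).sub h2).mul_left (R - 1)⁻¹
      rw [mul_one, inv_mul_cancel₀ hl.ne'] at h3
      have h4 : q = fun m => (R - 1)⁻¹ * (R * po n m - if m = n then (1 : ℝ) else 0) := by
        funext m
        simp only [hq]
        split_ifs with hm
        · rw [hm, hRp]; simp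
        · simp
      rw [h4]
      exact h3
    refine ⟨diagOp e q, (diagOp_PT e hq0 hqs).isDensity, ?_, by ring⟩
    have h2 : diagOp e (po n) = (1 + (R - 1))⁻¹ • (projv (e n) + (R - 1) • diagOp e q) := by
      refine hdiag.unique ?_
      have h3 := (hsingle.add ((diagOp_hasSum e hq0 hqs.summable).const_smul (R - 1))).const_smul
        (1 + (R - 1))⁻¹
      convert h3 using 2 with m
      have h4 : (1 + (R - 1))⁻¹ = po n n := by
        rw [hRd, add_sub_cancel, inv_inv]
      rw [h4]
      simp only [hq]
      split_ifs with hm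
      · rw [hm]; simp
      · rw [zero_add, smul_smul, smul_smul]
        congr 1
        rw [mul_assoc, mul_inv_cancel_left₀ hl.ne', ← mul_assoc, mul_comm _ R, hRp, one_mul]
    rw [← h2]
    exact diag_classical e n

/-- the generalized robustness of nonclassicality of the `n`-th Fock state is
`R_C(|n⟩⟨n|) = eⁿ n!/nⁿ`. -/
theorem robustness_nonclassicality_fock (e : HilbertBasis ℕ ℂ H) (n : ℕ) :
    Robustness e (ClassicalStates e) (projv (e n)) =
      ENNReal.ofReal (Real.exp n * (Nat.factorial n : ℝ) / (n : ℝ) ^ n) := by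

  rw [po_inv]
  apply le_antisymm
  · obtain ⟨lam, hl, τ, hτ, hC, h⟩ := feasible e n
    exact sInf_le ⟨lam, hl, τ, hτ, hC, by rw [h]⟩
  · refine le_sInf ?_
    rintro _ ⟨lam, hl, τ, hτ, hC, rfl⟩
    refine ENNReal.ofReal_le_ofReal ?_
    have h := lower_bound e n lam hl τ hτ hC
    exact (inv_le_comm₀ (by positivity) (po_pos_self n)).1 h
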